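/- Fix n ∈ ℕ and set V_n = p⁻ⁿL₀ / pⁿL₀. The assignment sending an O-submodule L of 𝔤 to its image L/pⁿL₀ in V_n defines a bijection from the set E = { L : pⁿL₀ ⊆ L ⊆ p⁻ⁿL₀ and L^♯ = L } onto the set E' of O-submodules Z of V_n such that d(Z) = nN and κ(x,y) ∈ O for all x, y ∈ p⁻ⁿL₀ whose images in V_n lie in Z. -/

import Mathlib

noncomputable section

open scoped Pointwise

/-- The length `d(Z)` of a module, i.e. the Krull dimension of its lattice of submodules. -/
def modLength (R M : Type*) [Ring R] [AddCommGroup M] [Module R M] : WithBot ℕ∞ :=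
  Order.krullDim (Submodule R M)

/-!
Let `c = pⁿ` and `P = c L₀`, so that `P^♯ = c⁻¹ L₀`. Duality `L ↦ L^♯` is an inclusion-reversing
involution on lattices, hence `ℓ(A, C) = ℓ(C^♯, A^♯)` for the relative length `ℓ`, and every lattice
`L` between `P` and `P^♯` satisfies `ℓ(P, L) + ℓ(P, L^♯) = ℓ(P, L) + ℓ(L, P^♯) = ℓ(P, P^♯)`. For
`L = L₀` this gives `ℓ(P, P^♯) = 2 ℓ(P, L₀)`. Therefore a self-dual `L` has `ℓ(P, L) = ℓ(P, L₀)`,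
and conversely an isotropic `L` of that length has `ℓ(L, L^♯) = 0`, i.e. `L = L^♯`.
-/

section RelLength

variable {R V : Type*} [Ring R] [AddCommGroup V] [Module R V] {A B C : Submodule R V}

lemma mkQ_mem_map_iff (h : A ≤ B) {x : V} : A.mkQ x ∈ B.map A.mkQ ↔ x ∈ B := by
  rw [← Submodule.mem_comap, Submodule.comap_map_mkQ, sup_eq_right.mpr h]

/-- The correspondence theorem for the submodules between `A` and `B`, as an isomorphism of ordered
sets. -/
def mapMkQOrderIso (hAB : A ≤ B) : Set.Icc A B ≃o Set.Iic (B.map A.mkQ) where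
  toFun L := ⟨L.1.map A.mkQ, Submodule.map_mono L.2.2⟩
  invFun Z := ⟨Z.1.comap A.mkQ, A.le_comap_mkQ _, fun _ hx => (mkQ_mem_map_iff hAB).1 (Z.2 hx)⟩
  left_inv L := Subtype.ext ((Submodule.comap_map_mkQ _ _).trans (sup_eq_right.mpr L.2.1))
  right_inv Z := Subtype.ext (Submodule.map_comap_eq_of_surjective A.mkQ_surjective Z.1)
  map_rel_iff' {L M} := by
    refine ⟨fun h x hx => ?_, Submodule.map_mono⟩
    exact (mkQ_mem_map_iff M.2.1).1 (h (Submodule.mem_map_of_mem hx))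

lemma bijOn_map_mkQ (hAB : A ≤ B) {p : Submodule R V → Prop} {q : Submodule R (V ⧸ A) → Prop}
    (hpq : ∀ L, A ≤ L → L ≤ B → (p L ↔ q (L.map A.mkQ))) :
    Set.BijOn (Submodule.map A.mkQ) {L | A ≤ L ∧ L ≤ B ∧ p L} {Z | Z ≤ B.map A.mkQ ∧ q Z} := by
  refine ⟨?_, ?_, ?_⟩
  · rintro L ⟨hAL, hLB, hL⟩
    exact ⟨Submodule.map_mono hLB, (hpq L hAL hLB).1 hL⟩
  · rintro L ⟨hAL, hLB, -⟩ M ⟨hAM, hMB, -⟩ hLM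
    exact congrArg Subtype.val ((mapMkQOrderIso hAB).injective
      (a₁ := ⟨L, hAL, hLB⟩) (a₂ := ⟨M, hAM, hMB⟩) (Subtype.ext hLM))
  · rintro Z ⟨hZB, hZ⟩
    obtain ⟨⟨L, hAL, hLB⟩, hL⟩ := (mapMkQOrderIso hAB).surjective ⟨Z, hZB⟩
    obtain rfl : L.map A.mkQ = Z := congrArg Subtype.val hL
    exact ⟨L, ⟨hAL, hLB, (hpq L hAL hLB).2 hZ⟩, rfl⟩

/-- The length of `B / A`, for submodules `A ≤ B` of a common module `V`. It is read off the image
of `B` in `V ⧸ A`, so that without `A ≤ B` it is the length of `(A ⊔ B) / A`. -/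
def relLength (A B : Submodule R V) : ℕ∞ := Module.length R ↥(B.map A.mkQ)

lemma relLength_eq_zero_iff : relLength A B = 0 ↔ B ≤ A := by
  rw [relLength, Module.length_eq_zero_iff, Submodule.subsingleton_iff_eq_bot,
    ← LinearMap.le_ker_iff_map, Submodule.ker_mkQ]

lemma relLength_add_relLength (hAB : A ≤ B) (hBC : B ≤ C) :
    relLength A B + relLength B C = relLength A C := by
  have hmaps : ∀ x ∈ C.map A.mkQ, Submodule.factor hAB x ∈ C.map B.mkQ := by
    rintro _ ⟨y, hy, rfl⟩
    exact ⟨y, hy, rfl⟩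
  refine (Module.length_eq_add_of_exact (Submodule.inclusion (Submodule.map_mono hBC))
    ((Submodule.factor hAB).restrict hmaps) (Submodule.inclusion_injective _) ?_ ?_).symm
  · rintro ⟨_, y, hy, rfl⟩
    exact ⟨⟨A.mkQ y, y, hy, rfl⟩, rfl⟩
  · rintro ⟨_, y, hy, rfl⟩
    calc (Submodule.factor hAB).restrict hmaps ⟨A.mkQ y, y, hy, rfl⟩ = 0
        ↔ B.mkQ y = 0 := Subtype.ext_iff
      _ ↔ A.mkQ y ∈ B.map A.mkQ := by
        rw [mkQ_mem_map_iff hAB, Submodule.mkQ_apply, Submodule.Quotient.mk_eq_zero]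
      _ ↔ _ := by
        rw [← SetLike.mem_coe, ← LinearMap.coe_range, Submodule.range_inclusion]
        rfl

lemma coe_relLength (hAB : A ≤ B) :
    (relLength A B : WithBot ℕ∞) = Order.krullDim (Set.Icc A B) := by
  rw [relLength, Module.coe_length, Order.krullDim_eq_of_orderIso (Submodule.mapIic _),
    Order.krullDim_eq_of_orderIso (mapMkQOrderIso hAB)]

lemma modLength_map_mkQ_eq_natCast_iff {m : ℕ} :
    modLength R ↥(B.map A.mkQ) = m ↔ relLength A B = m := by
  rw [modLength, ← Module.coe_length]
  exact WithBot.coe_inj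

end RelLength

section Smul

variable {R : Type*} [CommRing R]

lemma ord_pow_of_irreducible [IsDomain R] [IsPrincipalIdealRing R] {ϖ : R} (hϖ : Irreducible ϖ)
    (n : ℕ) : Ring.ord R (ϖ ^ n) = n := by
  rw [Ring.ord_pow (mem_nonZeroDivisors_of_ne_zero hϖ.ne_zero), Ring.ord_of_irreducible hϖ,
    nsmul_one]

lemma length_quotSMulTop (M : Type*) [AddCommGroup M] [Module R M] [Module.Free R M]
    [Module.Finite R M] (c : R) :
    Module.length R (QuotSMulTop c M) = Module.finrank R M * Ring.ord R c := by
  nontriviality R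
  let b := Module.Free.chooseBasis R M
  let e : QuotSMulTop c M ≃ₗ[R] Module.Free.ChooseBasisIndex R M →₀ R ⧸ Ideal.span {c} :=
    QuotSMulTop.equivQuotTensor c M ≪≫ₗ b.repr.lTensor _ ≪≫ₗ
      TensorProduct.finsuppScalarRight R R _ _
  rw [e.length_eq, Module.length_finsupp, ENat.card_eq_coe_fintype_card,
    Module.finrank_eq_card_basis b, Ring.ord]

lemma relLength_smul_self {V : Type*} [AddCommGroup V] [Module R V] (c : R) (L : Submodule R V) :
    relLength (c • L) L = Module.length R (QuotSMulTop c L) := by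
  have hker : LinearMap.ker ((c • L).mkQ ∘ₗ L.subtype) = c • ⊤ := by
    have hsmul : c • L = (c • (⊤ : Submodule R L)).map L.subtype := by
      rw [Submodule.map_pointwise_smul, Submodule.map_subtype_top]
    rw [LinearMap.ker_comp, Submodule.ker_mkQ, hsmul,
      Submodule.comap_map_eq_of_injective L.injective_subtype]
  rw [relLength, ← L.range_subtype, ← LinearMap.range_comp, L.range_subtype,
    ← (LinearMap.quotKerEquivRange _).length_eq, (Submodule.quotEquivOfEq _ _ hker).length_eq]

end Smul

section Lattice

open Submodule (IsLattice)

variable {R K V : Type*} [CommRing R] [Field K] [Algebra R K] [AddCommGroup V] [Module K V]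
  [Module R V] [IsScalarTower R K V]

lemma isLattice_smul [FaithfulSMul R K] (L : Submodule R V) [IsLattice K L] {c : R} (hc : c ≠ 0) :
    IsLattice K (c • L) := by
  have hcK : algebraMap R K c ≠ 0 := by simpa using hc
  have hsmul : c • L = Units.mk0 _ hcK • L := by
    ext x
    simp only [Submodule.mem_smul_pointwise_iff_exists, Units.smul_def, Units.val_mk0,
      algebraMap_smul]
  rw [hsmul]
  infer_instance

lemma isLattice_of_le_of_le [IsNoetherianRing R] {A L C : Submodule R V} [IsLattice K A]
    [IsLattice K C] (hAL : A ≤ L) (hLC : L ≤ C) : IsLattice K L :=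
  have : IsNoetherian R L := isNoetherian_of_le hLC
  .of_le_of_isLattice_of_fg K hAL (Module.Finite.iff_fg.1 inferInstance)

variable [IsDomain R] [IsPrincipalIdealRing R] [IsFractionRing R K]

lemma finrank_lattice (L : Submodule R V) [IsLattice K L] :
    Module.finrank R L = Module.finrank K V :=
  congrArg Cardinal.toNat (IsLattice.rank' K L)

lemma relLength_smul_lattice (L : Submodule R V) [IsLattice K L] (c : R) :
    relLength (c • L) L = Module.finrank K V * Ring.ord R c := by
  rw [relLength_smul_self, length_quotSMulTop, finrank_lattice]

lemma exists_basis_span_eq (L : Submodule R V) [IsLattice K L] :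
    ∃ b : Module.Basis (Fin (Module.finrank K V)) K V, Submodule.span R (Set.range b) = L := by
  let b := Module.finBasisOfFinrankEq R L (finrank_lattice L)
  have hrange : Set.range (b.extendOfIsLattice K) = L.subtype '' Set.range b := by
    rw [← Set.range_comp]
    exact congrArg Set.range (funext fun i => b.extendOfIsLattice_apply K i)
  refine ⟨b.extendOfIsLattice K, ?_⟩
  rw [hrange, ← Submodule.map_span, b.span_eq, Submodule.map_subtype_top]

end Lattice

section DualLattice

open Submodule (IsLattice)
open LinearMap (BilinForm)

variable {R K V : Type*} [CommRing R] [Field K] [Algebra R K]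
  [AddCommGroup V] [Module K V] [Module R V] [IsScalarTower R K V] {B : BilinForm K V}

lemma coe_dualSubmodule (L : Submodule R V) :
    (B.dualSubmodule L : Set V) = {x | ∀ y ∈ L, B x y ∈ (algebraMap R K).range} := by
  ext x
  simp only [SetLike.mem_coe, BilinForm.mem_dualSubmodule, Submodule.mem_one, Set.mem_ofPred_eq,
    RingHom.mem_range]

lemma dualSubmodule_antitone : Antitone (B.dualSubmodule : Submodule R V → Submodule R V) :=
  fun _ _ h _ hx y hy => hx y (h hy)

lemma dualSubmodule_smul (c : R) (L : Submodule R V) :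
    B.dualSubmodule (c • L) = (B.dualSubmodule L).comap (LinearMap.lsmul R V c) := by
  have hB : ∀ x y, B x (c • y) = B (c • x) y := fun x y => by
    rw [← algebraMap_smul K c x, ← algebraMap_smul K c y, BilinForm.smul_left,
      BilinForm.smul_right]
  ext x
  simp only [BilinForm.mem_dualSubmodule, Submodule.mem_smul_pointwise_iff_exists,
    forall_exists_index, and_imp, forall_apply_eq_imp_iff₂, hB, Submodule.mem_comap,
    LinearMap.lsmul_apply]

lemma forall_mkQ_mem_map_iff_le_dualSubmodule {P L Q : Submodule R V} (hPL : P ≤ L) (hLQ : L ≤ Q) :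
    (∀ x ∈ Q, ∀ y ∈ Q, P.mkQ x ∈ L.map P.mkQ → P.mkQ y ∈ L.map P.mkQ →
      B x y ∈ (algebraMap R K).range) ↔ L ≤ B.dualSubmodule L := by
  rw [← SetLike.coe_subset_coe, coe_dualSubmodule]
  simp only [mkQ_mem_map_iff hPL]
  exact ⟨fun h x hx y hy => h x (hLQ hx) y (hLQ hy) hx hy, fun h x _ y _ hx hy => h hx y hy⟩

variable [IsDomain R] [IsPrincipalIdealRing R] [IsFractionRing R K]

lemma isLattice_dualSubmodule (hB : B.Nondegenerate) (L : Submodule R V) [IsLattice K L] :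
    IsLattice K (B.dualSubmodule L) := by
  classical
  obtain ⟨b, hb⟩ := exists_basis_span_eq L
  rw [← hb, B.dualSubmodule_span_of_basis hB b]
  refine ⟨Submodule.fg_span (Set.finite_range _), ?_⟩
  rw [Submodule.span_span_of_tower, Module.Basis.span_eq]

lemma dualSubmodule_dualSubmodule (hB : B.Nondegenerate) (hsymm : B.IsSymm) (L : Submodule R V)
    [IsLattice K L] : B.dualSubmodule (B.dualSubmodule L) = L := by
  obtain ⟨b, hb⟩ := exists_basis_span_eq L
  rw [← hb, B.dualSubmodule_dualSubmodule_of_basis hB hsymm b]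

lemma relLength_le_relLength_dualSubmodule (hB : B.Nondegenerate) (hsymm : B.IsSymm)
    {A C : Submodule R V} [IsLattice K A] [IsLattice K C] (hAC : A ≤ C) :
    relLength A C ≤ relLength (B.dualSubmodule C) (B.dualSubmodule A) := by
  let dual (L : Set.Icc A C) : (Set.Icc (B.dualSubmodule C) (B.dualSubmodule A))ᵒᵈ :=
    .toDual ⟨B.dualSubmodule L, dualSubmodule_antitone L.2.2, dualSubmodule_antitone L.2.1⟩
  have hdual_inj : Function.Injective dual := fun L M h => by
    have := isLattice_of_le_of_le L.2.1 L.2.2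
    have := isLattice_of_le_of_le M.2.1 M.2.2
    have hLM : B.dualSubmodule L.1 = B.dualSubmodule M.1 := congrArg (fun N => N.ofDual.1) h
    ext1
    rw [← dualSubmodule_dualSubmodule hB hsymm L.1, hLM, dualSubmodule_dualSubmodule hB hsymm]
  have hdual_mono : Monotone dual := fun _ _ h => dualSubmodule_antitone h
  rw [← WithBot.coe_le_coe, coe_relLength hAC, coe_relLength (dualSubmodule_antitone hAC),
    ← Order.krullDim_orderDual (α := Set.Icc (B.dualSubmodule C) _)]
  exact Order.krullDim_le_of_strictMono dual (hdual_mono.strictMono_of_injective hdual_inj)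

lemma relLength_dualSubmodule (hB : B.Nondegenerate) (hsymm : B.IsSymm) {A C : Submodule R V}
    [IsLattice K A] [IsLattice K C] (hAC : A ≤ C) :
    relLength (B.dualSubmodule C) (B.dualSubmodule A) = relLength A C := by
  have := isLattice_dualSubmodule hB A
  have := isLattice_dualSubmodule hB C
  refine le_antisymm ?_ (relLength_le_relLength_dualSubmodule hB hsymm hAC)
  simpa only [dualSubmodule_dualSubmodule hB hsymm] using
    relLength_le_relLength_dualSubmodule hB hsymm (dualSubmodule_antitone (B := B) hAC)

lemma relLength_add_relLength_dualSubmodule (hB : B.Nondegenerate) (hsymm : B.IsSymm)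
    {P L : Submodule R V} [IsLattice K P] (hPL : P ≤ L) (hL : L ≤ B.dualSubmodule P) :
    relLength P L + relLength P (B.dualSubmodule L) = relLength P (B.dualSubmodule P) := by
  have := isLattice_dualSubmodule hB P
  have := isLattice_of_le_of_le hPL hL
  have hdual : relLength P (B.dualSubmodule L) = relLength L (B.dualSubmodule P) := by
    simpa only [dualSubmodule_dualSubmodule hB hsymm] using relLength_dualSubmodule hB hsymm hL
  rw [hdual, relLength_add_relLength hPL hL]

lemma dualSubmodule_eq_self_iff (hB : B.Nondegenerate) (hsymm : B.IsSymm)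
    {P L₀ L : Submodule R V} [IsLattice K P] (hPL₀ : P ≤ L₀) (hL₀ : B.dualSubmodule L₀ = L₀)
    (hfin : relLength P L₀ ≠ ⊤) (hPL : P ≤ L) (hL : L ≤ B.dualSubmodule P) :
    B.dualSubmodule L = L ↔ relLength P L = relLength P L₀ ∧ L ≤ B.dualSubmodule L := by
  have hL₀P : L₀ ≤ B.dualSubmodule P := hL₀.ge.trans (dualSubmodule_antitone hPL₀)
  have hsum : relLength P L + relLength P (B.dualSubmodule L) =
      relLength P L₀ + relLength P L₀ := by
    rw [relLength_add_relLength_dualSubmodule hB hsymm hPL hL,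
      ← relLength_add_relLength_dualSubmodule hB hsymm hPL₀ hL₀P, hL₀]
  constructor
  · intro hself
    rw [hself] at hsum
    refine ⟨?_, hself.ge⟩
    generalize relLength P L = a, relLength P L₀ = m at hsum hfin
    enat_to_nat
    omega
  · rintro ⟨hlen, hiso⟩
    have hcancel := ENat.add_right_injective_of_ne_top hfin
    rw [hlen] at hsum
    have hdual : relLength P (B.dualSubmodule L) = relLength P L₀ := hcancel hsum
    have hadd := relLength_add_relLength hPL hiso
    rw [hdual, hlen] at hadd
    have hzero : relLength L (B.dualSubmodule L) = 0 := hcancel (hadd.trans (add_zero _).symm)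
    exact le_antisymm (relLength_eq_zero_iff.1 hzero) hiso

end DualLattice

theorem statement11_general {R K V : Type*} [CommRing R] [IsDomain R] [IsPrincipalIdealRing R]
    [Field K] [Algebra R K] [IsFractionRing R K] [AddCommGroup V] [Module K V] [Module R V]
    [IsScalarTower R K V] {B : LinearMap.BilinForm K V} (hB : B.Nondegenerate) (hsymm : B.IsSymm)
    {L₀ : Submodule R V} (hfg : L₀.FG) (hspan : Submodule.span K (L₀ : Set V) = ⊤)
    (hself : {x : V | ∀ y ∈ L₀, B x y ∈ (algebraMap R K).range} = (L₀ : Set V))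
    {c : R} (hc : c ≠ 0) {d : ℕ} (hd : Ring.ord R c = d) :
    Set.BijOn (fun L : Submodule R V => Submodule.map (c • L₀).mkQ L)
      {L : Submodule R V | c • L₀ ≤ L ∧ L ≤ L₀.comap (LinearMap.lsmul R V c) ∧
        {x : V | ∀ y ∈ L, B x y ∈ (algebraMap R K).range} = (L : Set V)}
      {Z : Submodule R (V ⧸ (c • L₀)) |
        Z ≤ Submodule.map (c • L₀).mkQ (L₀.comap (LinearMap.lsmul R V c)) ∧
        modLength R ↥Z = (d * Module.finrank K V : ℕ) ∧
        (∀ x ∈ L₀.comap (LinearMap.lsmul R V c), ∀ y ∈ L₀.comap (LinearMap.lsmul R V c),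
          (c • L₀).mkQ x ∈ Z → (c • L₀).mkQ y ∈ Z → B x y ∈ (algebraMap R K).range)} := by
  have : Submodule.IsLattice K L₀ := ⟨hfg, hspan⟩
  have := isLattice_smul L₀ hc
  simp only [← coe_dualSubmodule, SetLike.coe_set_eq] at hself ⊢
  have hdual : B.dualSubmodule (c • L₀) = L₀.comap (LinearMap.lsmul R V c) := by
    rw [dualSubmodule_smul, hself]
  have hlen : relLength (c • L₀) L₀ = (d * Module.finrank K V : ℕ) := by
    rw [relLength_smul_lattice, hd, mul_comm, Nat.cast_mul]
  have hPL₀ : c • L₀ ≤ L₀ := Submodule.smul_le_self_of_tower c L₀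
  have hPQ : c • L₀ ≤ L₀.comap (LinearMap.lsmul R V c) :=
    hPL₀.trans fun _ hx => L₀.smul_mem c hx
  refine bijOn_map_mkQ hPQ fun L hPL hLQ => ?_
  rw [dualSubmodule_eq_self_iff hB hsymm hPL₀ hself (hlen ▸ ENat.natCast_ne_top _) hPL
    (hdual ▸ hLQ), hlen, ← modLength_map_mkQ_eq_natCast_iff,
    ← forall_mkQ_mem_map_iff_le_dualSubmodule hPL hLQ]

theorem statement11
    (p : ℕ) [Fact p.Prime]
    (k : Type*) [Field k] [IsAlgClosed k] [CharP k p]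
    (K : Type*) [Field K] [Algebra (WittVector p k) K] [IsFractionRing (WittVector p k) K]
    (𝔤 : Type*) [LieRing 𝔤] [LieAlgebra K 𝔤] [FiniteDimensional K 𝔤]
    [Module (WittVector p k) 𝔤] [IsScalarTower (WittVector p k) K 𝔤]
    (hnd : (killingForm K 𝔤).Nondegenerate)
    (L₀ : Submodule (WittVector p k) 𝔤) (hfg : L₀.FG)
    (hspan : Submodule.span K (L₀ : Set 𝔤) = ⊤)
    (hbr : ∀ x ∈ L₀, ∀ y ∈ L₀, ⁅x, y⁆ ∈ L₀)
    (hself : {x : 𝔤 | ∀ y ∈ L₀, killingForm K 𝔤 x y ∈ (algebraMap (WittVector p k) K).range}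
      = (L₀ : Set 𝔤))
    (n : ℕ) :
    Set.BijOn (fun L : Submodule (WittVector p k) 𝔤 =>
        Submodule.map ((p : WittVector p k) ^ n • L₀).mkQ L)
      {L : Submodule (WittVector p k) 𝔤 |
        (p : WittVector p k) ^ n • L₀ ≤ L ∧
        L ≤ L₀.comap (LinearMap.lsmul (WittVector p k) 𝔤 ((p : WittVector p k) ^ n)) ∧
        {x : 𝔤 | ∀ y ∈ L, killingForm K 𝔤 x y ∈ (algebraMap (WittVector p k) K).range}
          = (L : Set 𝔤)}
      {Z : Submodule (WittVector p k) (𝔤 ⧸ ((p : WittVector p k) ^ n • L₀)) |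
        Z ≤ Submodule.map ((p : WittVector p k) ^ n • L₀).mkQ
            (L₀.comap (LinearMap.lsmul (WittVector p k) 𝔤 ((p : WittVector p k) ^ n))) ∧
        modLength (WittVector p k) ↥Z = (n * Module.finrank K 𝔤 : ℕ) ∧
        (∀ x ∈ L₀.comap (LinearMap.lsmul (WittVector p k) 𝔤 ((p : WittVector p k) ^ n)),
         ∀ y ∈ L₀.comap (LinearMap.lsmul (WittVector p k) 𝔤 ((p : WittVector p k) ^ n)),
          ((p : WittVector p k) ^ n • L₀).mkQ x ∈ Z →
          ((p : WittVector p k) ^ n • L₀).mkQ y ∈ Z →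
          killingForm K 𝔤 x y ∈ (algebraMap (WittVector p k) K).range)} := by
  exact statement11_general hnd ⟨LieModule.traceForm_comm K 𝔤 𝔤⟩ hfg hspan hself
    (pow_ne_zero n (WittVector.irreducible p).ne_zero)
    (ord_pow_of_irreducible (WittVector.irreducible p) n)
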